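/- Let Σ_Λ be a blur shift space (with the subspace topology inherited from the full blur shift Σ) and let L_0(Λ) = {x ∈ Σ_Λ : x_0 is a symbol H̃ with H ∈ V}. Then: (i) the shift map σ : Σ_Λ → Σ_Λ is continuous at every point of Σ_Λ ∖ L_0(Λ); (ii) σ is continuous at a point (H̃ H̃ H̃ …) ∈ L_0(Λ) if and only if there exists a finite set F ⊆ H such that ⋃_{h ∈ H∖F} F_Λ(h) ⊆ H, and for every g ∈ H the set H ∩ P_Λ(g) is finite, where P_Λ(g) = {b ∈ A : bg ∈ B(Λ)} is the predecessor set of g. -/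

import Mathlib

/-!
Prepending a letter `a` turns a cylinder into a cylinder, so the preimage under `σ` of a cylinder is
open once it is cut down to the open set of sequences starting with `a`. This settles the points
whose first symbol is a letter.

The point `H̃ H̃ …` is fixed by `σ` and has the cylinders `Z(∅, H, F)`, `F ⊆ H` finite, as a
neighbourhood basis. In a point of `Σ_Λ` starting with `h ∈ A`, the second symbol is either a
follower of `h` or some `G̃` such that `h` has infinitely many followers in `G`. As distinct blurred
sets are almost disjoint, followers of `h` confined to `H` force `G = H` in the second case, so `σ`
maps `Z(∅, H, F') ∩ Σ_Λ` into `Z(∅, H, F)` exactly when `F_Λ(h) ⊆ H ∖ F` for all `h ∈ H ∖ F'`.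
-/

open Set Filter Topology

namespace BlurPaper

/-- The extended alphabet `Ā = A ⊕ V`, where each blurred set `H ∈ V` is regarded
as a new symbol `H̃`. -/
abbrev Symb (A : Type*) (V : Set (Set A)) := A ⊕ {H : Set A // H ∈ V}

/-- `V` is a family of blurred sets: every member is infinite and two distinct members
have finite intersection. -/
def IsBlurFamily {A : Type*} (V : Set (Set A)) : Prop :=
  (∀ H ∈ V, H.Infinite) ∧ ∀ G ∈ V, ∀ H ∈ V, G ≠ H → (G ∩ H).Finite

/-- The full blur shift `Σ`: sequences over `Ā` such that a blur symbol is followed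
by the same blur symbol. -/
def FullBlur (A : Type*) (V : Set (Set A)) : Set (ℕ → Symb A V) :=
  {x | ∀ (i : ℕ) (H : {H : Set A // H ∈ V}), x i = Sum.inr H → x (i + 1) = Sum.inr H}

/-- Generalized cylinder `Z(α)`. -/
def Z (A : Type*) (V : Set (Set A)) (α : List A) : Set (FullBlur A V) :=
  {x | ∀ i : Fin α.length, x.1 i = Sum.inl (α.get i)}

/-- Generalized cylinder `Z(α, H, F)`. -/
def ZH (A : Type*) (V : Set (Set A)) (α : List A) (H : {H : Set A // H ∈ V})
    (F : Set A) : Set (FullBlur A V) :=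
  {x | (∀ i : Fin α.length, x.1 i = Sum.inl (α.get i)) ∧
    (x.1 α.length = Sum.inr H ∨ ∃ a ∈ H.1 \ F, x.1 α.length = Sum.inl a)}

/-- The collection of all generalized cylinders. -/
def Cylinders (A : Type*) (V : Set (Set A)) : Set (Set (FullBlur A V)) :=
  {U | ∃ α : List A, U = Z A V α} ∪
  {U | ∃ (α : List A) (H : {H : Set A // H ∈ V}) (F : Set A),
    F ⊆ H.1 ∧ F.Finite ∧ U = ZH A V α H F}

/-- The topology on the full blur shift generated by the generalized cylinders. -/
def tau (A : Type*) (V : Set (Set A)) : TopologicalSpace (FullBlur A V) :=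
  TopologicalSpace.generateFrom (Cylinders A V)

/-- The shift map on the full blur shift. -/
def shift (A : Type*) (V : Set (Set A)) : FullBlur A V → FullBlur A V :=
  fun x => ⟨fun i => x.1 (i + 1), fun i H h => x.2 (i + 1) H h⟩

/-- The shift map on `A^ℕ`. -/
def shiftSeq (A : Type*) : (ℕ → A) → ℕ → A := fun x i => x (i + 1)

/-- The prodiscrete topology on `A^ℕ` (product of discrete topologies). -/
def prodDiscrete (A : Type*) : TopologicalSpace (ℕ → A) :=
  @Pi.topologicalSpace ℕ (fun _ => A) fun _ => ⊥

/-- A (classical) shift space over `A`: closed in the prodiscrete topology and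
invariant under the shift map. -/
def IsShiftSpace {A : Type*} (Λ : Set (ℕ → A)) : Prop :=
  @IsClosed _ (prodDiscrete A) Λ ∧ ∀ x ∈ Λ, shiftSeq A x ∈ Λ

/-- `w ∈ B(Y)`: the finite word `w` appears as an initial word of some element of `Y`. -/
def InLang {A : Type*} (Y : Set (ℕ → A)) (w : List A) : Prop :=
  ∃ x ∈ Y, ∀ i : Fin w.length, x i = w.get i

/-- The follower set `F_Y(w) = {a : w a ∈ B(Y)}`. -/
def Fol {A : Type*} (Y : Set (ℕ → A)) (w : List A) : Set A :=
  {a | InLang Y (w ++ [a])}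

/-- The predecessor set `P_Y(a) = {b : b a ∈ B(Y)}`. -/
def Pred {A : Type*} (Y : Set (ℕ → A)) (a : A) : Set A :=
  {b | InLang Y [b, a]}

/-- `B₁(Y)`: the set of letters occurring in sequences of `Y`. -/
def letters {A : Type*} (Y : Set (ℕ → A)) : Set A :=
  {a | ∃ x ∈ Y, ∃ i, x i = a}

/-- The canonical embedding `A^ℕ → Σ`. -/
def embed (A : Type*) (V : Set (Set A)) : (ℕ → A) → FullBlur A V :=
  fun x => ⟨fun i => Sum.inl (x i), fun _ _ h => absurd h (by simp)⟩

/-- The point `(a₀ … a_{n-1} H̃ H̃ H̃ …)` of the full blur shift. -/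
def wordBlur {A : Type*} {V : Set (Set A)} (α : List A) (H : {H : Set A // H ∈ V}) :
    FullBlur A V :=
  ⟨fun i => if h : i < α.length then Sum.inl (α.get ⟨i, h⟩) else Sum.inr H, by
    intro i K hK
    by_cases h : i < α.length
    · simp only [dif_pos h] at hK
      exact absurd hK (by simp)
    · simp only [dif_neg h] at hK
      simp only [dif_neg (by omega : ¬ i + 1 < α.length)]
      exact hK⟩

/-- The boundary `∂Y`: points `(a₀ … a_{n-1} H̃ H̃ …)` with `a₀ … a_{n-1} ∈ B(Y)` and
`F_Y(a₀ … a_{n-1}) ∩ H` infinite. -/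
def boundary (A : Type*) (V : Set (Set A)) (Y : Set (ℕ → A)) : Set (FullBlur A V) :=
  {z | ∃ (α : List A) (H : {H : Set A // H ∈ V}),
    z = wordBlur α H ∧ InLang Y α ∧ (Fol Y α ∩ H.1).Infinite}

/-- The blur shift space `Σ_Y = Y ∪ ∂Y` of `Y` with resolution `V`. -/
def SigmaOf (A : Type*) (V : Set (Set A)) (Y : Set (ℕ → A)) : Set (FullBlur A V) :=
  embed A V '' Y ∪ boundary A V Y

/-- The subspace topology inherited from the full blur shift. -/
def subTau (A : Type*) (V : Set (Set A)) (X : Set (FullBlur A V)) :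
    TopologicalSpace X :=
  TopologicalSpace.induced Subtype.val (tau A V)

/-- `V_Λ`: the blurred sets that appear in `Σ_Λ`, i.e. those meeting `B₁(Λ)` in an
infinite set. -/
def VLam (A : Type*) (V : Set (Set A)) (Λ : Set (ℕ → A)) : Set (Set A) :=
  {H | H ∈ V ∧ (letters Λ ∩ H).Infinite}

section Words

variable {A : Type*} {V : Set (Set A)} {Λ : Set (ℕ → A)} {α β : List A} {a : A} {i : ℕ}
  {F F' : Set A} {G H : {H : Set A // H ∈ V}} {x : FullBlur A V}

theorem mem_Z_nil : x ∈ Z A V [] := fun i => i.elim0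

theorem mem_Z_cons : x ∈ Z A V (a :: α) ↔ x.1 0 = Sum.inl a ∧ shift A V x ∈ Z A V α :=
  Fin.forall_fin_succ

theorem mem_Z_singleton : x ∈ Z A V [a] ↔ x.1 0 = Sum.inl a :=
  mem_Z_cons.trans (and_iff_left mem_Z_nil)

theorem mem_Z_pair {b : A} : x ∈ Z A V [a, b] ↔ x.1 0 = Sum.inl a ∧ x.1 1 = Sum.inl b :=
  mem_Z_cons.trans (and_congr_right' mem_Z_singleton)

theorem mem_Z_iff_getElem? : x ∈ Z A V α ↔ ∀ i a, α[i]? = some a → x.1 i = Sum.inl a := by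
  simp only [List.getElem?_eq_some_iff, forall_exists_index]
  exact ⟨fun h i a hi ha => ha ▸ h ⟨i, hi⟩, fun h i => h i _ i.2 rfl⟩

theorem mem_ZH_cons :
    x ∈ ZH A V (a :: α) H F ↔ x.1 0 = Sum.inl a ∧ shift A V x ∈ ZH A V α H F :=
  (and_congr_left' mem_Z_cons).trans and_assoc

theorem mem_ZH_nil :
    x ∈ ZH A V [] H F ↔ x.1 0 = Sum.inr H ∨ ∃ a ∈ H.1 \ F, x.1 0 = Sum.inl a :=
  and_iff_right mem_Z_nil

theorem ZH_antitone : Antitone (ZH A V α H) :=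
  fun _ _ hF _ hx => ⟨hx.1, hx.2.imp_right fun ⟨a, ha, hxa⟩ =>
    ⟨a, sdiff_subset_sdiff_right hF ha, hxa⟩⟩

theorem wordBlur_apply_eq_inl_iff : (wordBlur β H).1 i = Sum.inl a ↔ β[i]? = some a := by
  by_cases hi : i < β.length <;> simp [wordBlur, hi]

theorem wordBlur_apply_eq_inr_iff :
    (wordBlur β H).1 i = Sum.inr G ↔ β.length ≤ i ∧ H = G := by
  by_cases hi : i < β.length <;> simp [wordBlur, hi, not_le.2, not_lt.1]

theorem wordBlur_mem_Z_iff : wordBlur β H ∈ Z A V α ↔ α <+: β := by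
  simp only [mem_Z_iff_getElem?, wordBlur_apply_eq_inl_iff, List.prefix_iff_getElem?,
    List.getElem?_eq_some_iff, forall_exists_index]
  exact ⟨fun h i hi => h i _ hi rfl, fun h i a hi ha => ha ▸ h i hi⟩

theorem shift_wordBlur_nil : shift A V (wordBlur [] H) = wordBlur [] H := rfl

theorem inLang_iff_exists_embed_mem_Z (V : Set (Set A)) :
    InLang Λ α ↔ ∃ x ∈ Λ, embed A V x ∈ Z A V α := by
  simp only [InLang, Z, embed, mem_ofPred_eq, Sum.inl.injEq]

theorem inLang_of_prefix (h : α <+: β) (hβ : InLang Λ β) : InLang Λ α := by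
  obtain ⟨x, hx, hxβ⟩ := hβ
  exact ⟨x, hx, fun i => (hxβ ⟨i, i.2.trans_le h.length_le⟩).trans (h.getElem i.2).symm⟩

theorem inLang_of_mem_Z (hx : x ∈ SigmaOf A V Λ) (hxα : x ∈ Z A V α) : InLang Λ α := by
  rcases hx with ⟨y, hy, rfl⟩ | ⟨β, H, rfl, hβ, -⟩
  · exact (inLang_iff_exists_embed_mem_Z V).2 ⟨y, hy, hxα⟩
  · exact inLang_of_prefix (wordBlur_mem_Z_iff.1 hxα) hβ

theorem infinite_Fol_inter_of_mem_Z (hx : x ∈ SigmaOf A V Λ) (hxα : x ∈ Z A V α)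
    (hxG : x.1 α.length = Sum.inr G) : (Fol Λ α ∩ G.1).Infinite := by
  rcases hx with ⟨y, -, rfl⟩ | ⟨β, H, rfl, -, hβ⟩
  · cases hxG
  · obtain ⟨hlen, rfl⟩ := wordBlur_apply_eq_inr_iff.1 hxG
    rwa [(wordBlur_mem_Z_iff.1 hxα).eq_of_length_le hlen]

theorem mapsTo_shift_iff_Fol_subset (hV : V.Pairwise fun G H => (G ∩ H).Finite) :
    MapsTo (shift A V) (ZH A V [] H F' ∩ SigmaOf A V Λ) (ZH A V [] H F) ↔
      ∀ h ∈ H.1 \ F', Fol Λ [h] ⊆ H.1 \ F := by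
  constructor
  · intro hmaps h hh b hb
    obtain ⟨x, hx, hxhb⟩ := (inLang_iff_exists_embed_mem_Z V).1 hb
    obtain ⟨hx0, hx1⟩ := mem_Z_pair.1 hxhb
    have hmem := hmaps ⟨mem_ZH_nil.2 (.inr ⟨h, hh, hx0⟩), .inl (mem_image_of_mem _ hx)⟩
    rcases mem_ZH_nil.1 hmem with hxH | ⟨c, hc, hxc⟩
    · cases hxH
    · rwa [Sum.inl.inj (hx1.symm.trans hxc)]
  · rintro hFol x ⟨hxH, hx⟩
    refine mem_ZH_nil.2 ?_
    rcases mem_ZH_nil.1 hxH with hx0 | ⟨h, hh, hx0⟩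
    · exact .inl (x.2 0 H hx0)
    rcases hx1 : x.1 1 with b | G
    · exact .inr ⟨b, hFol h hh (inLang_of_mem_Z hx (mem_Z_pair.2 ⟨hx0, hx1⟩)), hx1⟩
    · have hinf : (Fol Λ [h] ∩ G.1).Infinite :=
        infinite_Fol_inter_of_mem_Z hx (mem_Z_singleton.2 hx0) hx1
      have hGH : G.1 = H.1 := by
        by_contra hne
        have hsub : Fol Λ [h] ∩ G.1 ⊆ G.1 ∩ H.1 := fun b hb => ⟨hb.2, (hFol h hh hb.1).1⟩
        exact hinf ((hV G.2 H.2 hne).subset hsub)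
      exact .inl (hx1.trans (congrArg Sum.inr (Subtype.ext hGH)))

theorem forall_exists_Fol_subset_diff_iff {S : Set A} :
    (∀ F ⊆ S, F.Finite → ∃ F' ⊆ S, F'.Finite ∧ ∀ h ∈ S \ F', Fol Λ [h] ⊆ S \ F) ↔
      (∃ F ⊆ S, F.Finite ∧ (⋃ h ∈ S \ F, Fol Λ [h]) ⊆ S) ∧
        ∀ g ∈ S, (S ∩ Pred Λ g).Finite := by
  constructor
  · refine fun hS => ⟨?_, fun g hg => ?_⟩
    · obtain ⟨F', hF'S, hF', hFol⟩ := hS ∅ (empty_subset S) finite_empty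
      exact ⟨F', hF'S, hF', iUnion₂_subset fun h hh => (hFol h hh).trans sdiff_subset⟩
    · obtain ⟨F', -, hF', hFol⟩ := hS {g} (singleton_subset_iff.2 hg) (finite_singleton g)
      refine hF'.subset fun b ⟨hbS, hbg⟩ => ?_
      by_contra hbF'
      exact (hFol b ⟨hbS, hbF'⟩ hbg).2 rfl
  · rintro ⟨⟨F₀, hF₀S, hF₀, hFol⟩, hPred⟩ F hFS hF
    refine ⟨F₀ ∪ ⋃ g ∈ F, S ∩ Pred Λ g, ?_, ?_, ?_⟩
    · exact union_subset hF₀S (iUnion₂_subset fun _ _ => inter_subset_left)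
    · exact hF₀.union (hF.biUnion fun g hg => hPred g (hFS hg))
    · rintro h ⟨hhS, hhF⟩ b hb
      exact ⟨hFol (mem_biUnion ⟨hhS, fun hhF₀ => hhF (.inl hhF₀)⟩ hb),
        fun hbF => hhF (.inr (mem_biUnion hbF ⟨hhS, hb⟩))⟩

end Words

section Topology

variable {A : Type*} {V : Set (Set A)} {U : Set (FullBlur A V)} {x : FullBlur A V}

instance : TopologicalSpace (FullBlur A V) := tau A V

theorem isOpen_of_mem_Cylinders (hU : U ∈ Cylinders A V) : IsOpen U :=
  TopologicalSpace.isOpen_generateFrom_of_mem hU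

theorem isOpen_Z (α : List A) : IsOpen (Z A V α) :=
  isOpen_of_mem_Cylinders (.inl ⟨α, rfl⟩)

theorem Z_singleton_inter_preimage_shift_mem_Cylinders (a : A) (hU : U ∈ Cylinders A V) :
    Z A V [a] ∩ shift A V ⁻¹' U ∈ Cylinders A V := by
  rcases hU with ⟨α, rfl⟩ | ⟨α, H, F, hFH, hF, rfl⟩
  · refine .inl ⟨a :: α, Set.ext fun x => ?_⟩
    exact (and_congr_left' mem_Z_singleton).trans mem_Z_cons.symm
  · refine .inr ⟨a :: α, H, F, hFH, hF, Set.ext fun x => ?_⟩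
    exact (and_congr_left' mem_Z_singleton).trans mem_ZH_cons.symm

theorem continuousOn_shift_Z_singleton (a : A) : ContinuousOn (shift A V) (Z A V [a]) := by
  refine continuousOn_to_generateFrom_iff.2 fun x hx U hU hxU => ?_
  have hopen := isOpen_of_mem_Cylinders (Z_singleton_inter_preimage_shift_mem_Cylinders a hU)
  exact mem_nhdsWithin.2 ⟨_, hopen, ⟨hx, hxU⟩, fun _ hy => hy.1.2⟩

theorem continuousAt_shift (hx : ¬ ∃ H : {H : Set A // H ∈ V}, x.1 0 = Sum.inr H) :
    ContinuousAt (shift A V) x := by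
  rcases hx0 : x.1 0 with a | H
  · exact (continuousOn_shift_Z_singleton a).continuousAt
      ((isOpen_Z [a]).mem_nhds (mem_Z_singleton.2 hx0))
  · exact absurd ⟨H, hx0⟩ hx

variable (H : {H : Set A // H ∈ V})

theorem exists_ZH_nil_subset_of_mem_Cylinders (hU : U ∈ Cylinders A V)
    (hHU : wordBlur [] H ∈ U) : ∃ F ⊆ H.1, F.Finite ∧ ZH A V [] H F ⊆ U := by
  rcases hU with ⟨α, rfl⟩ | ⟨α, G, F, hFG, hF, rfl⟩
  · obtain rfl := List.prefix_nil.1 (wordBlur_mem_Z_iff.1 hHU)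
    exact ⟨∅, empty_subset _, finite_empty, fun _ _ => mem_Z_nil⟩
  · obtain rfl := List.prefix_nil.1 (wordBlur_mem_Z_iff.1 hHU.1)
    rcases mem_ZH_nil.1 hHU with hHG | ⟨a, -, hHa⟩
    · obtain rfl := Sum.inr.inj hHG
      exact ⟨F, hFG, hF, Subset.rfl⟩
    · cases hHa

theorem nhds_wordBlur_nil :
    𝓝 (wordBlur [] H) = ⨅ F ∈ {F : Set A | F ⊆ H.1 ∧ F.Finite}, 𝓟 (ZH A V [] H F) := by
  refine TopologicalSpace.nhds_generateFrom.trans (le_antisymm ?_ ?_)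
  · exact le_iInf₂ fun F hF => iInf₂_le (ZH A V [] H F)
      ⟨mem_ZH_nil.2 (.inl rfl), .inr ⟨[], H, F, hF.1, hF.2, rfl⟩⟩
  · refine le_iInf₂ fun U ⟨hHU, hU⟩ => ?_
    obtain ⟨F, hFH, hF, hFU⟩ := exists_ZH_nil_subset_of_mem_Cylinders H hU hHU
    exact iInf₂_le_of_le F ⟨hFH, hF⟩ (principal_mono.2 hFU)

theorem hasBasis_nhds_wordBlur_nil :
    (𝓝 (wordBlur [] H)).HasBasis (fun F : Set A => F ⊆ H.1 ∧ F.Finite) (ZH A V [] H) := by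
  rw [nhds_wordBlur_nil]
  refine hasBasis_biInf_principal (fun F hF G hG => ?_) ⟨∅, empty_subset _, finite_empty⟩
  exact ⟨F ∪ G, ⟨union_subset hF.1 hG.1, hF.2.union hG.2⟩,
    ZH_antitone subset_union_left, ZH_antitone subset_union_right⟩

theorem continuousWithinAt_shift_wordBlur_nil_iff (X : Set (FullBlur A V)) :
    ContinuousWithinAt (shift A V) X (wordBlur [] H) ↔
      ∀ F ⊆ H.1, F.Finite → ∃ F' ⊆ H.1, F'.Finite ∧
        MapsTo (shift A V) (ZH A V [] H F' ∩ X) (ZH A V [] H F) := by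
  have hbasis := hasBasis_nhds_wordBlur_nil H
  rw [ContinuousWithinAt, shift_wordBlur_nil, (nhdsWithin_hasBasis hbasis X).tendsto_iff hbasis]
  simp only [and_imp, and_assoc, MapsTo]

end Topology

theorem continuity_of_shift_general {A : Type*} {V : Set (Set A)}
    (hV : V.Pairwise fun G H => (G ∩ H).Finite) (Λ : Set (ℕ → A)) :
    (∀ x : FullBlur A V, (¬ ∃ H : {H : Set A // H ∈ V}, x.1 0 = Sum.inr H) →
      ContinuousAt (shift A V) x) ∧
    (∀ H : {H : Set A // H ∈ V},
      (ContinuousWithinAt (shift A V) (SigmaOf A V Λ) (wordBlur [] H) ↔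
        (∃ F ⊆ H.1, F.Finite ∧ (⋃ h ∈ H.1 \ F, Fol Λ [h]) ⊆ H.1) ∧
          ∀ g ∈ H.1, (H.1 ∩ Pred Λ g).Finite)) := by
  refine ⟨fun x => continuousAt_shift, fun H => ?_⟩
  rw [continuousWithinAt_shift_wordBlur_nil_iff]
  simp only [mapsTo_shift_iff_Fol_subset hV]
  exact forall_exists_Fol_subset_diff_iff

/-- (i) The shift map on a blur shift space `Σ_Λ` is continuous at
every point outside `L₀(Λ)`; (ii) it is continuous at a point `(H̃ H̃ H̃ …) ∈ L₀(Λ)`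
if and only if there is a finite `F ⊆ H` with `⋃_{h ∈ H∖F} F_Λ(h) ⊆ H`, and
`H ∩ P_Λ(g)` is finite for every `g ∈ H`. -/
theorem continuity_of_shift {A : Type*} (V : Set (Set A))
    (hV : IsBlurFamily V) (Λ : Set (ℕ → A)) (hΛ : IsShiftSpace Λ) :
    (∀ x ∈ SigmaOf A V Λ, (¬ ∃ H : {H : Set A // H ∈ V}, x.1 0 = Sum.inr H) →
      @ContinuousWithinAt _ _ (tau A V) (tau A V) (shift A V) (SigmaOf A V Λ) x) ∧
    (∀ H : {H : Set A // H ∈ V}, wordBlur ([] : List A) H ∈ SigmaOf A V Λ →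
      (@ContinuousWithinAt _ _ (tau A V) (tau A V) (shift A V) (SigmaOf A V Λ)
          (wordBlur ([] : List A) H) ↔
        (∃ F ⊆ H.1, F.Finite ∧ (⋃ h ∈ H.1 \ F, Fol Λ [h]) ⊆ H.1) ∧
          ∀ g ∈ H.1, (H.1 ∩ Pred Λ g).Finite)) := by
  obtain ⟨hcont, hiff⟩ := continuity_of_shift_general (fun G hG H hH => hV.2 G hG H hH) Λ
  exact ⟨fun x _ hx => (hcont x hx).continuousWithinAt, fun H _ => hiff H⟩

end BlurPaper
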